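/- The constant β = arcsl(1)/Φ(1, 3/2, 1/4) satisfies 1/8 < β < 1/7. -/

import Mathlib

/-- The arc lemniscate sine function: `arcsl x = ∫₀ˣ dt / √(1 - t⁴)`. -/
noncomputable def arcsl (x : ℝ) : ℝ := ∫ t in (0:ℝ)..x, 1 / Real.sqrt (1 - t ^ 4)

/-- The Lerch zeta function: `Φ(z, s, a) = ∑ₖ zᵏ / (k + a)ˢ`. -/
noncomputable def lerchPhi (z s a : ℝ) : ℝ := ∑' k : ℕ, z ^ k / ((k : ℝ) + a) ^ s

/-!
Substituting `t = sin θ` gives `arcsl 1 = ∫ θ in 0..π/2, g (sin θ ^ 2)` with `g u = 1 / √(1 + u)`.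
As `g` is convex and `sin² θ + sin² (π/2 - θ) = 1`, pairing `θ` with `π/2 - θ` shows that the mean
of the integrand lies between `g (1/2)` and `(g 0 + g 1) / 2`. For `Φ(1, s, a)`, antitonicity of
`t⁻ˢ` bounds the sum below by the integral of `t⁻ˢ` over `(a, ∞)`, while convexity (the midpoint
rule) bounds it above by the integral over `(a - 1/2, ∞)`. Applying these bounds after splitting off
one term below and two above gives `1.28 < arcsl 1 < 1.35` and `9.75 < Φ(1, 3/2, 1/4) < 10.24`.
-/

open Real Set MeasureTheory

section HermiteHadamard

variable {a b : ℝ}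

theorem intervalIntegrable_comp_reflect {f : ℝ → ℝ} (hf : IntervalIntegrable f volume a b) :
    IntervalIntegrable (fun x ↦ f (a + b - x)) volume a b := by
  simpa only [add_sub_cancel_left, add_sub_cancel_right] using (hf.comp_sub_left (a + b)).symm

theorem integral_add_comp_reflect {f : ℝ → ℝ} (hf : IntervalIntegrable f volume a b) :
    ∫ x in a..b, (f x + f (a + b - x)) = 2 * ∫ x in a..b, f x := by
  rw [intervalIntegral.integral_add hf (intervalIntegrable_comp_reflect hf),
    intervalIntegral.integral_comp_sub_left]
  simp only [add_sub_cancel_right, add_sub_cancel_left, two_mul]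

theorem two_mul_map_midpoint_le_add_of_convexOn {g : ℝ → ℝ} {s : Set ℝ} {m x y : ℝ}
    (hg : ConvexOn ℝ s g) (hx : x ∈ s) (hy : y ∈ s) (hxy : x + y = 2 * m) :
    2 * g m ≤ g x + g y := by
  have hm : (1 / 2 : ℝ) • x + (1 / 2 : ℝ) • y = m := by
    simp only [smul_eq_mul]
    linarith
  have hconv := hg.2 hx hy one_half_pos.le one_half_pos.le (add_halves 1)
  rw [hm, smul_eq_mul, smul_eq_mul] at hconv
  linarith

theorem add_le_add_endpoints_of_convexOn {g : ℝ → ℝ} {c d x y : ℝ}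
    (hg : ConvexOn ℝ (Icc c d) g) (hx : x ∈ Icc c d) (hxy : x + y = c + d) :
    g x + g y ≤ g c + g d := by
  have hcd : c ≤ d := hx.1.trans hx.2
  obtain ⟨μ, ν, hμ, hν, hμν, hcombx⟩ := (segment_eq_Icc hcd).symm ▸ hx
  have hcomby : ν • c + μ • d = y := by
    simp only [smul_eq_mul] at hcombx ⊢
    linear_combination (c + d) * hμν - hcombx - hxy
  have hgx := hg.2 (left_mem_Icc.2 hcd) (right_mem_Icc.2 hcd) hμ hν hμν
  have hgy := hg.2 (left_mem_Icc.2 hcd) (right_mem_Icc.2 hcd) hν hμ (by rwa [add_comm])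
  rw [hcombx] at hgx
  rw [hcomby] at hgy
  calc g x + g y ≤ (μ • g c + ν • g d) + (ν • g c + μ • g d) := add_le_add hgx hgy
    _ = (μ + ν) * (g c + g d) := by
      simp only [smul_eq_mul]
      ring
    _ = g c + g d := by rw [hμν, one_mul]

theorem mul_map_midpoint_le_integral_comp_of_convexOn {g h : ℝ → ℝ} {s : Set ℝ} {m : ℝ}
    (hab : a ≤ b) (hg : ConvexOn ℝ s g) (hs : MapsTo h (Icc a b) s)
    (hsymm : ∀ x ∈ Icc a b, h x + h (a + b - x) = 2 * m)
    (hint : IntervalIntegrable (fun x ↦ g (h x)) volume a b) :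
    (b - a) * g m ≤ ∫ x in a..b, g (h x) := by
  have hpair : ∀ x ∈ Icc a b, 2 * g m ≤ g (h x) + g (h (a + b - x)) := fun x hx ↦
    two_mul_map_midpoint_le_add_of_convexOn hg (hs hx)
      (hs ⟨by linarith [hx.2], by linarith [hx.1]⟩) (hsymm x hx)
  have hmono := intervalIntegral.integral_mono_on hab intervalIntegrable_const
    (hint.add (intervalIntegrable_comp_reflect hint)) hpair
  rw [intervalIntegral.integral_const, smul_eq_mul, integral_add_comp_reflect hint] at hmono
  linarith

theorem integral_comp_le_mul_add_div_two_of_convexOn {g h : ℝ → ℝ} {c d : ℝ}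
    (hab : a ≤ b) (hg : ConvexOn ℝ (Icc c d) g) (hs : MapsTo h (Icc a b) (Icc c d))
    (hsymm : ∀ x ∈ Icc a b, h x + h (a + b - x) = c + d)
    (hint : IntervalIntegrable (fun x ↦ g (h x)) volume a b) :
    ∫ x in a..b, g (h x) ≤ (b - a) * ((g c + g d) / 2) := by
  have hmono := intervalIntegral.integral_mono_on hab
    (hint.add (intervalIntegrable_comp_reflect hint)) intervalIntegrable_const
    fun x hx ↦ add_le_add_endpoints_of_convexOn hg (hs hx) (hsymm x hx)
  rw [intervalIntegral.integral_const, smul_eq_mul, integral_add_comp_reflect hint] at hmono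
  linarith

end HermiteHadamard

theorem convexOn_rpow_of_nonpos {p : ℝ} (hp : p ≤ 0) : ConvexOn ℝ (Ioi 0) fun x : ℝ ↦ x ^ p := by
  have hlog : ConvexOn ℝ (Ioi 0) fun x : ℝ ↦ p * log x := by
    simpa only [Pi.neg_def, Pi.smul_apply, smul_eq_mul, neg_mul, neg_neg] using
      (strictConcaveOn_log_Ioi.concaveOn.smul (neg_nonneg.2 hp)).neg
  have himage : Convex ℝ ((fun x ↦ p * log x) '' Ioi 0) :=
    (isPreconnected_Ioi.image _ (hlog.continuousOn isOpen_Ioi)).ordConnected.convex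
  have hexp : ConvexOn ℝ (Ioi 0) (exp ∘ fun x ↦ p * log x) :=
    (convexOn_exp.subset (subset_univ _) himage).comp hlog (exp_monotone.monotoneOn _)
  refine hexp.congr fun x hx ↦ ?_
  rw [Function.comp_apply, rpow_def_of_pos hx, mul_comm]

section IntegralTest

variable {f : ℝ → ℝ} {c : ℝ}

theorem integral_Ioi_le_tsum_of_antitoneOn (hf : AntitoneOn f (Ici c))
    (hnonneg : ∀ t ∈ Ioi c, 0 ≤ f t) (hsum : Summable fun n : ℕ ↦ f (n + c)) :
    ∫ t in Ioi c, f t ≤ ∑' n : ℕ, f (n + c) := by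
  have hshift : ∫ t in Ioi 0, f (t + c) = ∫ t in Ioi c, f t := by
    simpa using (measurePreserving_add_right volume c).setIntegral_preimage_emb
      (measurableEmbedding_addRight c) f (Ioi c)
  rw [← hshift]
  refine AntitoneOn.integral_le_tsum (f := fun t ↦ f (t + c)) ?_ hsum ?_
  · intro x hx y hy hxy
    exact hf (by simpa using hx) (by simpa using hy) (by gcongr)
  · exact fun t ht ↦ hnonneg _ (by simpa using ht)

theorem tsum_le_integral_Ioi_of_convexOn (hf : ConvexOn ℝ (Ici c) f)
    (hnonneg : ∀ t ∈ Ioi c, 0 ≤ f t) (hint : IntegrableOn f (Ioi c)) :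
    ∑' n : ℕ, f (n + (c + 1 / 2)) ≤ ∫ t in Ioi c, f t := by
  have hadj (k : ℕ) : IntervalIntegrable f volume (c + k) (c + (k + 1 : ℕ)) := by
    rw [intervalIntegrable_iff_integrableOn_Ioc_of_le (by push_cast; linarith)]
    exact hint.mono_set fun t ht ↦ lt_of_le_of_lt (by simp) ht.1
  have hmidpoint (k : ℕ) : f (k + (c + 1 / 2)) ≤ ∫ t in c + k..c + (k + 1 : ℕ), f t := by
    have := mul_map_midpoint_le_integral_comp_of_convexOn (h := id) (m := k + (c + 1 / 2))
      (by push_cast; linarith) hf (fun t ht ↦ le_trans (by simp) ht.1)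
      (fun t _ ↦ by simp only [id]; push_cast; ring) (hadj k)
    simpa using this
  refine Real.tsum_le_of_sum_range_le (fun n ↦ hnonneg _ ?_) fun n ↦ ?_
  · rw [mem_Ioi]
    linarith [n.cast_nonneg (α := ℝ)]
  calc ∑ k ∈ Finset.range n, f (k + (c + 1 / 2))
      ≤ ∑ k ∈ Finset.range n, ∫ t in c + k..c + (k + 1 : ℕ), f t :=
        Finset.sum_le_sum fun k _ ↦ hmidpoint k
    _ = ∫ t in Ioc c (c + n), f t := by
        rw [intervalIntegral.sum_integral_adjacent_intervals (a := fun k : ℕ ↦ c + k)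
          fun k _ ↦ hadj k, Nat.cast_zero, add_zero, intervalIntegral.integral_of_le (by simp)]
    _ ≤ ∫ t in Ioi c, f t :=
        setIntegral_mono_set hint (ae_restrict_of_forall_mem measurableSet_Ioi hnonneg)
          Ioc_subset_Ioi_self.eventuallyLE

end IntegralTest

theorem integral_Ioi_rpow_neg {s c : ℝ} (hs : 1 < s) (hc : 0 < c) :
    ∫ t in Ioi c, t ^ (-s) = 1 / ((s - 1) * c ^ (s - 1)) := by
  rw [integral_Ioi_rpow_of_lt (by linarith) hc, show -s + 1 = -(s - 1) by ring, rpow_neg hc.le,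
    neg_div_neg_eq, div_eq_mul_inv, one_div, mul_inv, mul_comm]

section LerchPhi

variable {s a : ℝ}

theorem summable_natCast_add_rpow_neg (hs : 1 < s) (ha : 0 < a) :
    Summable fun k : ℕ ↦ ((k : ℝ) + a) ^ (-s) := by
  refine ((summable_one_div_nat_add_rpow a s).2 hs).congr fun k ↦ ?_
  have hk : 0 < (k : ℝ) + a := by positivity
  rw [abs_of_pos hk, rpow_neg hk.le, one_div]

theorem lerchPhi_one_eq_tsum_rpow_neg (ha : 0 < a) :
    lerchPhi 1 s a = ∑' k : ℕ, ((k : ℝ) + a) ^ (-s) := by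
  refine tsum_congr fun k ↦ ?_
  rw [one_pow, rpow_neg (by positivity), one_div]

theorem lerchPhi_one_eq_add (hs : 1 < s) (ha : 0 < a) :
    lerchPhi 1 s a = 1 / a ^ s + lerchPhi 1 s (a + 1) := by
  rw [lerchPhi_one_eq_tsum_rpow_neg ha, lerchPhi_one_eq_tsum_rpow_neg (by positivity),
    (summable_natCast_add_rpow_neg hs ha).tsum_eq_zero_add, Nat.cast_zero, zero_add,
    rpow_neg ha.le, one_div]
  simp only [Nat.cast_add, Nat.cast_one, add_right_comm, add_assoc]

theorem one_div_le_lerchPhi_one (hs : 1 < s) (ha : 0 < a) :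
    1 / ((s - 1) * a ^ (s - 1)) ≤ lerchPhi 1 s a := by
  rw [← integral_Ioi_rpow_neg hs ha, lerchPhi_one_eq_tsum_rpow_neg ha]
  refine integral_Ioi_le_tsum_of_antitoneOn (f := fun t ↦ t ^ (-s)) ?_
    (fun t ht ↦ rpow_nonneg (ha.trans ht).le _) (summable_natCast_add_rpow_neg hs ha)
  exact (antitoneOn_rpow_Ioi_of_exponent_nonpos (by linarith)).mono (Ici_subset_Ioi.2 ha)

theorem lerchPhi_one_le_one_div (hs : 1 < s) (ha : 1 / 2 < a) :
    lerchPhi 1 s a ≤ 1 / ((s - 1) * (a - 1 / 2) ^ (s - 1)) := by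
  have hc : 0 < a - 1 / 2 := sub_pos.2 ha
  have hconv : ConvexOn ℝ (Ici (a - 1 / 2)) fun t : ℝ ↦ t ^ (-s) :=
    (convexOn_rpow_of_nonpos (by linarith)).subset (Ici_subset_Ioi.2 hc) (convex_Ici _)
  rw [← integral_Ioi_rpow_neg hs hc, lerchPhi_one_eq_tsum_rpow_neg (by linarith)]
  simpa using tsum_le_integral_Ioi_of_convexOn hconv (fun t ht ↦ rpow_nonneg (hc.trans ht).le _)
    (integrableOn_Ioi_rpow_of_lt (by linarith) hc)

theorem rpow_three_halves {x : ℝ} (hx : 0 < x) : x ^ (3 / 2 : ℝ) = x * √x := by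
  rw [show (3 / 2 : ℝ) = 1 + 1 / 2 by norm_num, rpow_add hx, rpow_one, sqrt_eq_rpow]

theorem lerchPhi_one_three_halves_quarter_eq :
    lerchPhi 1 (3 / 2) (1 / 4) = 8 + lerchPhi 1 (3 / 2) (5 / 4) := by
  have hsqrt : √(1 / 4 : ℝ) = 1 / 2 := by
    rw [show (1 / 4 : ℝ) = (1 / 2) ^ 2 by norm_num, sqrt_sq (by norm_num)]
  rw [lerchPhi_one_eq_add (by norm_num) (by norm_num), rpow_three_halves (by norm_num), hsqrt]
  norm_num

theorem lt_lerchPhi_one_three_halves_quarter : 9.75 < lerchPhi 1 (3 / 2) (1 / 4) := by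
  have htail := one_div_le_lerchPhi_one (s := 3 / 2) (a := 5 / 4) (by norm_num) (by norm_num)
  rw [show (3 / 2 - 1 : ℝ) = 1 / 2 by norm_num, ← sqrt_eq_rpow] at htail
  have hsqrt : √(5 / 4 : ℝ) < 1.12 := (sqrt_lt' (by norm_num)).2 (by norm_num)
  have hfrac : 1.75 < 1 / (1 / 2 * √(5 / 4 : ℝ)) := by
    rw [lt_div_iff₀ (by positivity)]
    linarith
  linarith [lerchPhi_one_three_halves_quarter_eq]

theorem lerchPhi_one_three_halves_quarter_lt : lerchPhi 1 (3 / 2) (1 / 4) < 10.24 := by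
  have hsplit := lerchPhi_one_eq_add (s := 3 / 2) (a := 5 / 4) (by norm_num) (by norm_num)
  have htail := lerchPhi_one_le_one_div (s := 3 / 2) (a := 5 / 4 + 1) (by norm_num) (by norm_num)
  rw [rpow_three_halves (by norm_num)] at hsplit
  rw [show (3 / 2 - 1 : ℝ) = 1 / 2 by norm_num, ← sqrt_eq_rpow,
    show (5 / 4 + 1 - 1 / 2 : ℝ) = 7 / 4 by norm_num] at htail
  have hfirst : 1 / (5 / 4 * √(5 / 4 : ℝ)) < 0.72 := by
    have : (1.118 : ℝ) < √(5 / 4) := lt_sqrt_of_sq_lt (by norm_num)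
    rw [div_lt_iff₀ (by positivity)]
    linarith
  have hrest : 1 / (1 / 2 * √(7 / 4 : ℝ)) < 1.52 := by
    have : (1.322 : ℝ) < √(7 / 4) := lt_sqrt_of_sq_lt (by norm_num)
    rw [div_lt_iff₀ (by positivity)]
    linarith
  linarith [lerchPhi_one_three_halves_quarter_eq]

end LerchPhi

section Arcsl

theorem arcsl_sin {φ : ℝ} (hφ : φ ∈ Icc (-(π / 2)) (π / 2)) :
    arcsl (sin φ) = ∫ θ in 0..φ, 1 / √(1 + sin θ ^ 2) := by
  have hcos : ∀ θ ∈ Ioo (min 0 φ) (max 0 φ), 0 < cos θ := fun θ hθ ↦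
    cos_pos_of_mem_Ioo ⟨(le_min (by linarith [pi_pos]) hφ.1).trans_lt hθ.1,
      hθ.2.trans_le (max_le (by positivity) hφ.2)⟩
  have hsubst := intervalIntegral.integral_comp_mul_deriv_of_deriv_nonneg
    (g := fun t ↦ 1 / √(1 - t ^ 4)) continuous_sin.continuousOn
    (fun θ _ ↦ hasDerivAt_sin θ) fun θ hθ ↦ (hcos θ hθ).le
  rw [sin_zero] at hsubst
  rw [arcsl, ← hsubst]
  refine intervalIntegral.integral_congr_uIoo fun θ hθ ↦ ?_
  have hpos := hcos θ hθ
  have hfactor : 1 - sin θ ^ 4 = (1 + sin θ ^ 2) * cos θ ^ 2 := by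
    rw [cos_sq']
    ring
  simp only [Function.comp_apply]
  rw [hfactor, sqrt_mul (by positivity), sqrt_sq hpos.le]
  field_simp

theorem convexOn_one_div_sqrt_one_add : ConvexOn ℝ (Ioi (-1)) fun u : ℝ ↦ 1 / √(1 + u) := by
  have hshift := (convexOn_rpow_of_nonpos (p := -(1 / 2)) (by norm_num)).translate_right 1
  refine (hshift.subset (fun u hu ↦ ?_) (convex_Ioi _)).congr fun u hu ↦ ?_
  · exact neg_lt_iff_pos_add'.1 (mem_Ioi.1 hu)
  · have hpos : 0 < 1 + u := neg_lt_iff_pos_add'.1 (mem_Ioi.1 hu)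
    rw [Function.comp_apply, rpow_neg hpos.le, ← sqrt_eq_rpow, ← one_div]

theorem sin_sq_add_sin_pi_div_two_sub_sq (θ : ℝ) : sin θ ^ 2 + sin (0 + π / 2 - θ) ^ 2 = 1 := by
  rw [zero_add, sin_pi_div_two_sub, sin_sq_add_cos_sq]

theorem intervalIntegrable_one_div_sqrt_one_add_sin_sq (a b : ℝ) :
    IntervalIntegrable (fun θ ↦ 1 / √(1 + sin θ ^ 2)) volume a b := by
  refine Continuous.intervalIntegrable ?_ a b
  exact continuous_const.div (by fun_prop) fun θ ↦ by positivity

theorem arcsl_one_eq_integral : arcsl 1 = ∫ θ in 0..π / 2, 1 / √(1 + sin θ ^ 2) := by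
  simpa only [sin_pi_div_two] using arcsl_sin (φ := π / 2) ⟨by linarith [pi_pos], le_rfl⟩

theorem pi_div_two_mul_le_arcsl_one : π / 2 * (1 / √(1 + 1 / 2)) ≤ arcsl 1 := by
  rw [arcsl_one_eq_integral]
  have := mul_map_midpoint_le_integral_comp_of_convexOn (h := fun θ ↦ sin θ ^ 2) (m := 1 / 2)
    pi_div_two_pos.le convexOn_one_div_sqrt_one_add
    (fun θ _ ↦ neg_one_lt_zero.trans_le (sq_nonneg (sin θ)))
    (fun θ _ ↦ by rw [sin_sq_add_sin_pi_div_two_sub_sq]; norm_num)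
    (intervalIntegrable_one_div_sqrt_one_add_sin_sq _ _)
  rwa [sub_zero] at this

theorem arcsl_one_le_pi_div_two_mul : arcsl 1 ≤ π / 2 * ((1 + 1 / √2) / 2) := by
  rw [arcsl_one_eq_integral]
  have := integral_comp_le_mul_add_div_two_of_convexOn (h := fun θ ↦ sin θ ^ 2)
    (c := 0) (d := 1) pi_div_two_pos.le
    (convexOn_one_div_sqrt_one_add.subset (fun u hu ↦ neg_one_lt_zero.trans_le hu.1)
      (convex_Icc 0 1))
    (fun θ _ ↦ ⟨sq_nonneg (sin θ), sin_sq_le_one θ⟩)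
    (fun θ _ ↦ by rw [sin_sq_add_sin_pi_div_two_sub_sq, zero_add])
    (intervalIntegrable_one_div_sqrt_one_add_sin_sq _ _)
  simpa [one_add_one_eq_two] using this

theorem lt_arcsl_one : 1.28 < arcsl 1 := by
  have hsqrt : √(1 + 1 / 2 : ℝ) < 1.225 := (sqrt_lt' (by norm_num)).2 (by norm_num)
  calc (1.28 : ℝ) < 3.1415 / 2 * (1 / 1.225) := by norm_num
    _ ≤ π / 2 * (1 / √(1 + 1 / 2)) := by gcongr; exact pi_gt_d4.le
    _ ≤ arcsl 1 := pi_div_two_mul_le_arcsl_one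

theorem arcsl_one_lt : arcsl 1 < 1.35 := by
  have hsqrt : (1.414 : ℝ) < √2 := lt_sqrt_of_sq_lt (by norm_num)
  calc arcsl 1 ≤ π / 2 * ((1 + 1 / √2) / 2) := arcsl_one_le_pi_div_two_mul
    _ ≤ 3.1416 / 2 * ((1 + 1 / 1.414) / 2) := by gcongr; exact pi_lt_d4.le
    _ < 1.35 := by norm_num

end Arcsl

theorem beta_between :
    1 / 8 < arcsl 1 / lerchPhi 1 (3 / 2) (1 / 4) ∧
      arcsl 1 / lerchPhi 1 (3 / 2) (1 / 4) < 1 / 7 := by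
  have hpos : 0 < lerchPhi 1 (3 / 2) (1 / 4) := by
    linarith [lt_lerchPhi_one_three_halves_quarter]
  constructor
  · rw [lt_div_iff₀ hpos]
    linarith [lt_arcsl_one, lerchPhi_one_three_halves_quarter_lt]
  · rw [div_lt_iff₀ hpos]
    linarith [arcsl_one_lt, lt_lerchPhi_one_three_halves_quarter]
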